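/- arXiv:1410.5535 — 2 statements merged into one kernel-verified Lean document; each statement's English description precedes it below -/
import Mathlib

section
/- Let n ≥ 2 be an integer. Then the function (z,τ) ↦ (|z|⁴ + τ² − 1)|z|² / (τ² + (1+|z|²)²)^{n+2} is integrable on ℂ^n × ℝ and ∫_{ℂ^n×ℝ} (|z|⁴ + τ² − 1)|z|² / (τ² + (1+|z|²)²)^{n+2} dz dτ > 0. In particular the constant A₂ = (1/(2n)) ∫_{ℂ^n×ℝ} 4^n (|z|⁴ + τ² − 1)|z|² / (τ² + (1+|z|²)²)^{n+2} dz dτ is positive. -/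
open MeasureTheory Real Set

/-- `normSq z = |z|²` for `z ∈ ℂⁿ`. -/
noncomputable def normSq {n : ℕ} (z : Fin n → ℂ) : ℝ := ∑ i, ‖z i‖ ^ 2

lemma normSq_nonneg' {n : ℕ} (z : Fin n → ℂ) : 0 ≤ normSq z :=
  Finset.sum_nonneg fun _ _ => by positivity

lemma normSq_continuous (n : ℕ) : Continuous (normSq : (Fin n → ℂ) → ℝ) := by
  unfold normSq; fun_prop

lemma norm_sq_le_normSq {n : ℕ} (z : Fin n → ℂ) : ‖z‖ ^ 2 ≤ normSq z := by
  have h : ‖z‖ ≤ √(normSq z) := by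
    refine (pi_norm_le_iff_of_nonneg (Real.sqrt_nonneg _)).2 fun i => ?_
    apply Real.le_sqrt_of_sq_le
    exact Finset.single_le_sum (f := fun i => ‖z i‖ ^ 2) (fun _ _ => by positivity)
      (Finset.mem_univ i)
  calc ‖z‖ ^ 2 ≤ √(normSq z) ^ 2 := by gcongr
    _ = normSq z := Real.sq_sqrt (normSq_nonneg' z)

lemma polar (n : ℕ) (hn : 1 ≤ n) : ∃ c : ℝ, 0 < c ∧ ∀ f : ℝ → ℝ,
    ∫ z : Fin n → ℂ, f (normSq z) = c * ∫ r in Ioi (0 : ℝ), r ^ (2 * n - 1) * f (r ^ 2) := by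
  let e : EuclideanSpace ℂ (Fin n) ≃L[ℝ] (Fin n → ℂ) :=
    PiLp.continuousLinearEquiv 2 ℝ (fun _ => ℂ)
  let μ : Measure (EuclideanSpace ℂ (Fin n)) := Measure.map e.symm volume
  have : μ.IsAddHaarMeasure := ContinuousLinearEquiv.isAddHaarMeasure_map e.symm volume
  have hne : Nonempty (Fin n) := ⟨⟨0, hn⟩⟩
  have hd : Module.finrank ℝ (EuclideanSpace ℂ (Fin n)) = 2 * n := by
    rw [e.toLinearEquiv.finrank_eq, Module.finrank_pi_fintype]
    simp [Complex.finrank_real_complex, mul_comm]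
  refine ⟨2 * n * μ.real (Metric.ball 0 1), ?_, fun f => ?_⟩
  · have : 0 < μ.real (Metric.ball 0 1) :=
      ENNReal.toReal_pos (Metric.measure_ball_pos μ 0 one_pos).ne' measure_ball_lt_top.ne
    positivity
  · have : Nontrivial (EuclideanSpace ℂ (Fin n)) := by
      apply Module.nontrivial_of_finrank_pos (R := ℝ); omega
    have h := integral_fun_norm_addHaar μ (fun r => f (r ^ 2))
    have h2 : ∫ x, f (‖x‖ ^ 2) ∂μ = ∫ z : Fin n → ℂ, f (normSq z) := by
      refine (e.symm.toHomeomorph.measurableEmbedding.integral_map _).trans ?_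
      refine integral_congr_ae (Filter.Eventually.of_forall fun z => ?_)
      show f (‖e.symm z‖ ^ 2) = _
      rw [EuclideanSpace.norm_sq_eq]
      rfl
    rw [← h2, h, hd]
    simp [mul_assoc]

lemma int_dom {μ : Measure ℝ} {f : ℝ → ℝ} (C : ℝ) (hμ : μ ≤ volume) (hf : Continuous f)
    (h : ∀ᵐ x ∂μ, |f x| ≤ C * (1 + x ^ 2)⁻¹) : Integrable f μ :=
  ((integrable_inv_one_add_sq.mono_measure hμ).const_mul C).mono' hf.aestronglyMeasurable h

lemma tend_dom {l : Filter ℝ} (hl : Filter.Tendsto (fun x : ℝ => |x|) l Filter.atTop)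
    {f : ℝ → ℝ} (C : ℝ) (h : ∀ᶠ x in l, |f x| ≤ C * |x|⁻¹) : Filter.Tendsto f l (nhds 0) := by
  apply squeeze_zero_norm' h
  simpa using (tendsto_inv_atTop_zero.comp hl).const_mul C

lemma K_int (m : ℕ) : Integrable (fun t : ℝ => 1 / (t ^ 2 + 1) ^ (m + 1)) := by
  refine int_dom 1 le_rfl (by fun_prop (disch := intros; positivity)) (Filter.Eventually.of_forall fun t => ?_)
  rw [abs_of_nonneg (by positivity), one_mul, ← one_div]
  apply one_div_le_one_div_of_le (by positivity)
  rw [add_comm]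
  exact le_self_pow₀ (by nlinarith [sq_nonneg t]) (by omega)

lemma K_pos (m : ℕ) : 0 < ∫ t : ℝ, 1 / (t ^ 2 + 1) ^ (m + 1) := by
  rw [integral_pos_iff_support_of_nonneg (fun t => by positivity) (K_int m)]
  have : Function.support (fun t : ℝ => 1 / (t ^ 2 + 1) ^ (m + 1)) = univ := by
    ext t; simp only [Function.mem_support, mem_univ, iff_true]; positivity
  rw [this]; simp

lemma K_rec (m : ℕ) : 2 * (m + 1 : ℝ) * ∫ t : ℝ, 1 / (t ^ 2 + 1) ^ (m + 2)
    = (2 * m + 1) * ∫ t : ℝ, 1 / (t ^ 2 + 1) ^ (m + 1) := by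
  have hi1 := (K_int (m + 1)).const_mul (2 * (m + 1 : ℝ))
  have hi2 := (K_int m).const_mul (2 * (m : ℝ) + 1)
  have key : ∫ t : ℝ, (2 * (m + 1 : ℝ) * (1 / (t ^ 2 + 1) ^ (m + 2))
      - (2 * m + 1) * (1 / (t ^ 2 + 1) ^ (m + 1))) = 0 - 0 := by
    have hb : ∀ x : ℝ, x ≠ 0 → |x / (x ^ 2 + 1) ^ (m + 1)| ≤ 1 * |x|⁻¹ := by
      intro x hx
      have hx' : 0 < |x| := abs_pos.2 hx
      rw [abs_div, abs_of_nonneg (by positivity : 0 ≤ (x ^ 2 + 1) ^ (m + 1)), one_mul,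
        div_le_iff₀ (by positivity), ← div_eq_inv_mul, le_div_iff₀ hx']
      have : x ^ 2 + 1 ≤ (x ^ 2 + 1) ^ (m + 1) :=
        le_self_pow₀ (by nlinarith [sq_nonneg x]) (by omega)
      rw [abs_mul_abs_self]; nlinarith
    refine integral_of_hasDerivAt_of_tendsto (f := fun x : ℝ => x / (x ^ 2 + 1) ^ (m + 1)) ?_
      (hi1.sub hi2) ?_ ?_
    · intro x
      have hpos : 0 < x ^ 2 + 1 := by positivity
      have h1 : HasDerivAt (fun x : ℝ => (x ^ 2 + 1) ^ (m + 1))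
          ((m + 1 : ℕ) * (x ^ 2 + 1) ^ m * (2 * x)) x := by
        have := ((hasDerivAt_pow 2 x).add_const 1).fun_pow (m + 1)
        simpa using this
      refine ((hasDerivAt_id' x).fun_div h1 (by positivity)).congr_deriv ?_
      field_simp
      push_cast
      ring
    · exact tend_dom Filter.tendsto_abs_atBot_atTop 1
        ((Filter.eventually_ne_atBot 0).mono hb)
    · exact tend_dom Filter.tendsto_abs_atTop_atTop 1
        ((Filter.eventually_ne_atTop 0).mono hb)
  rw [integral_sub hi1 hi2, integral_const_mul, integral_const_mul] at key
  linarith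

lemma inner_int (n : ℕ) : ∃ k : ℝ, 0 < k ∧ ∀ a : ℝ, 0 < a →
    ∫ t : ℝ, (t ^ 2 + a ^ 2 - 2 * a) / (t ^ 2 + a ^ 2) ^ (n + 2)
      = k * (((n + 1) * a - (2 * n + 1)) / a ^ (2 * n + 2)) := by
  refine ⟨(∫ t : ℝ, 1 / (t ^ 2 + 1) ^ (n + 1)) / (n + 1), div_pos (K_pos n) (by positivity),
    fun a ha => ?_⟩
  have hrec := K_rec n
  have hi1 := K_int n
  have hi2 := (K_int (n + 1)).const_mul (2 / a)
  have hsub : ∀ t : ℝ, (t ^ 2 + a ^ 2 - 2 * a) / (t ^ 2 + a ^ 2) ^ (n + 2)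
      = (1 / a ^ (2 * n + 2)) * (fun u : ℝ => 1 / (u ^ 2 + 1) ^ (n + 1)
        - 2 / a * (1 / (u ^ 2 + 1) ^ (n + 2))) (a⁻¹ * t) := by
    intro t
    have h0 : t ^ 2 + a ^ 2 = a ^ 2 * ((a⁻¹ * t) ^ 2 + 1) := by field_simp
    have h1 : 0 < (a⁻¹ * t) ^ 2 + 1 := by positivity
    simp only
    rw [h0]
    generalize (a⁻¹ * t) ^ 2 + 1 = w at h1
    rw [mul_pow]
    have : (a ^ 2) ^ (n + 2) = a ^ (2 * n + 2) * a ^ 2 := by ring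
    rw [this, pow_succ w (n + 1)]
    field_simp
  rw [integral_congr_ae (Filter.Eventually.of_forall hsub)]
  rw [integral_const_mul, Measure.integral_comp_inv_mul_left
    (fun u : ℝ => 1 / (u ^ 2 + 1) ^ (n + 1) - 2 / a * (1 / (u ^ 2 + 1) ^ (n + 2))), integral_sub hi1 hi2,
    integral_const_mul, abs_of_pos ha, smul_eq_mul]
  have hn0 : (n : ℝ) + 1 ≠ 0 := by positivity
  have hK : ∫ t : ℝ, 1 / (t ^ 2 + 1) ^ (n + 2)
      = (2 * n + 1 : ℝ) / (2 * (n + 1)) * ∫ t : ℝ, 1 / (t ^ 2 + 1) ^ (n + 1) := by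
    rw [div_mul_eq_mul_div, eq_div_iff (by positivity)]; linarith
  rw [hK]
  generalize (∫ t : ℝ, 1 / (t ^ 2 + 1) ^ (n + 1)) = K
  field_simp

lemma radial_core (k p : ℕ) (hk : k ≤ 2 * p) (r : ℝ) :
    r ^ k ≤ (1 + r ^ 2) ^ p := by
  have h1 : (r ^ k) ^ 2 ≤ ((1 + r ^ 2) ^ p) ^ 2 := by
    calc (r ^ k) ^ 2 = (r ^ 2) ^ k := by rw [← pow_mul, ← pow_mul, mul_comm]
      _ ≤ (1 + r ^ 2) ^ k := by gcongr; linarith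
      _ ≤ (1 + r ^ 2) ^ (2 * p) := pow_le_pow_right₀ (by nlinarith [sq_nonneg r]) hk
      _ = _ := by rw [← pow_mul, mul_comm]
  exact le_of_abs_le (abs_le_of_sq_le_sq h1 (by positivity))

lemma radial_int (k p : ℕ) (hk : k ≤ 2 * p) :
    IntegrableOn (fun r : ℝ => r ^ k / (1 + r ^ 2) ^ (p + 1)) (Ioi 0) := by
  refine int_dom 1 Measure.restrict_le_self
    (Continuous.div (by fun_prop) (by fun_prop) fun r => by positivity) ?_
  filter_upwards [ae_restrict_mem measurableSet_Ioi] with r hr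
  have hr : 0 < r := hr
  rw [abs_of_nonneg (by positivity), one_mul]
  rw [div_le_iff₀ (by positivity), pow_succ (1 + r ^ 2) p, mul_comm _ (1 + r ^ 2),
    inv_mul_cancel_left₀ (by positivity)]
  exact radial_core k p hk r

lemma radial_pos (n : ℕ) (hn : 2 ≤ n) :
    0 < ∫ r in Ioi (0 : ℝ), r ^ (2 * n - 1) *
      (r ^ 2 * (((n + 1) * (1 + r ^ 2) - (2 * n + 1)) / (1 + r ^ 2) ^ (2 * n + 2))) := by
  have hi1 : IntegrableOn (fun r : ℝ => r ^ (2 * n + 1) / (1 + r ^ 2) ^ (2 * n + 2)) (Ioi 0) :=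
    radial_int (2 * n + 1) (2 * n + 1) (by omega)
  have hi3 : IntegrableOn (fun r : ℝ => r ^ (2 * n + 3) / (1 + r ^ 2) ^ (2 * n + 2)) (Ioi 0) :=
    radial_int (2 * n + 3) (2 * n + 1) (by omega)
  have hsplit : ∀ r : ℝ, r ^ (2 * n - 1) *
      (r ^ 2 * (((n + 1) * (1 + r ^ 2) - (2 * n + 1)) / (1 + r ^ 2) ^ (2 * n + 2)))
      = (n + 1 : ℝ) * (r ^ (2 * n + 3) / (1 + r ^ 2) ^ (2 * n + 2))
        - n * (r ^ (2 * n + 1) / (1 + r ^ 2) ^ (2 * n + 2)) := by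
    intro r
    have e : r ^ (2 * n + 1) = r ^ (2 * n - 1) * r ^ 2 := by
      rw [← pow_add]; congr 1; omega
    have e' : r ^ (2 * n + 3) = r ^ (2 * n - 1) * r ^ 2 * r ^ 2 := by
      rw [← pow_add, ← pow_add]; congr 1; omega
    rw [e, e']; ring
  have hpos : 0 < ∫ r in Ioi (0 : ℝ), r ^ (2 * n + 1) / (1 + r ^ 2) ^ (2 * n + 2) := by
    rw [setIntegral_pos_iff_support_of_nonneg_ae _ hi1]
    · have : Ioi (0 : ℝ) ⊆
          Function.support (fun r : ℝ => r ^ (2 * n + 1) / (1 + r ^ 2) ^ (2 * n + 2)) := by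
        intro r hr
        have hr : 0 < r := hr
        simp only [Function.mem_support]
        positivity
      rw [inter_eq_right.2 this]; simp
    · filter_upwards [ae_restrict_mem measurableSet_Ioi] with r hr
      have hr : 0 < r := hr
      simp only [Pi.zero_apply]
      positivity
  have hrel : ∫ r in Ioi (0 : ℝ), (2 * (n + 1 : ℝ) * (r ^ (2 * n + 1) / (1 + r ^ 2) ^ (2 * n + 2))
      - 2 * n * (r ^ (2 * n + 3) / (1 + r ^ 2) ^ (2 * n + 2)))
      = 0 - (fun r : ℝ => r ^ (2 * n + 2) / (1 + r ^ 2) ^ (2 * n + 1)) 0 := by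
    refine integral_Ioi_of_hasDerivAt_of_tendsto'
      (f := fun r : ℝ => r ^ (2 * n + 2) / (1 + r ^ 2) ^ (2 * n + 1)) ?_
      ((hi1.const_mul _).sub (hi3.const_mul _)) ?_
    · intro r _
      have h1 : HasDerivAt (fun x : ℝ => (1 + x ^ 2) ^ (2 * n + 1))
          ((2 * n + 1 : ℕ) * (1 + r ^ 2) ^ (2 * n) * (2 * r)) r := by
        have := ((hasDerivAt_pow 2 r).const_add 1).fun_pow (2 * n + 1)
        simpa using this
      refine ((hasDerivAt_pow (2 * n + 2) r).fun_div h1 (by positivity)).congr_deriv ?_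
      have hq : 0 < 1 + r ^ 2 := by positivity
      rw [show 2 * n + 2 - 1 = 2 * n + 1 from rfl, pow_succ (1 + r ^ 2) (2 * n + 1),
        pow_succ (1 + r ^ 2) (2 * n)]
      field_simp
      push_cast
      ring
    · refine tend_dom Filter.tendsto_abs_atTop_atTop 1 ?_
      filter_upwards [Filter.eventually_gt_atTop 0] with r hr
      rw [abs_of_nonneg (by positivity), one_mul, abs_of_pos hr, div_le_iff₀ (by positivity),
        ← div_eq_inv_mul, le_div_iff₀ hr, ← pow_succ]
      exact radial_core _ _ (by omega) r
  rw [integral_congr_ae (Filter.Eventually.of_forall hsplit),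
    integral_sub (hi3.const_mul _) (hi1.const_mul _), integral_const_mul, integral_const_mul]
  rw [integral_sub (hi1.const_mul _) (hi3.const_mul _), integral_const_mul,
    integral_const_mul] at hrel
  simp only [ne_eq, Nat.add_eq_zero_iff, OfNat.ofNat_ne_zero, and_false, not_false_eq_true,
    zero_pow, zero_div, sub_zero] at hrel
  generalize (∫ r in Ioi (0 : ℝ), r ^ (2 * n + 1) / (1 + r ^ 2) ^ (2 * n + 2)) = A at *
  generalize (∫ r in Ioi (0 : ℝ), r ^ (2 * n + 3) / (1 + r ^ 2) ^ (2 * n + 2)) = B at *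
  have hn' : (0 : ℝ) < n := by exact_mod_cast (by omega : 0 < n)
  have : 0 < (n : ℝ) * ((n + 1) * B - n * A) := by
    have h : (n : ℝ) * ((n + 1) * B - n * A) = (2 * n + 1) * A := by linear_combination -(n + 1 : ℝ) / 2 * hrel
    rw [h]; positivity
  exact (mul_pos_iff_of_pos_left hn').1 this

lemma main_int (n : ℕ) (hn : 2 ≤ n) : Integrable (fun p : (Fin n → ℂ) × ℝ =>
      (normSq p.1 ^ 2 + p.2 ^ 2 - 1) * normSq p.1 /
        (p.2 ^ 2 + (1 + normSq p.1) ^ 2) ^ (n + 2)) := by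
  have hz : Integrable (fun z : Fin n → ℂ => (1 + ‖z‖ ^ 2) ^ (-(4 * n - 2 : ℝ) / 2)) := by
    apply integrable_rpow_neg_one_add_norm_sq
    rw [Module.finrank_pi_fintype]
    simp only [Complex.finrank_real_complex, Finset.sum_const, Finset.card_univ, Fintype.card_fin,
      smul_eq_mul]
    have : (2 : ℝ) ≤ n := by exact_mod_cast hn
    push_cast
    linarith
  have hc : Continuous (fun p : (Fin n → ℂ) × ℝ =>
      (normSq p.1 ^ 2 + p.2 ^ 2 - 1) * normSq p.1 /
        (p.2 ^ 2 + (1 + normSq p.1) ^ 2) ^ (n + 2)) := by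
    have h := (normSq_continuous n).comp (continuous_fst (X := Fin n → ℂ) (Y := ℝ))
    have h' : Continuous (fun p : (Fin n → ℂ) × ℝ => normSq p.1) := h
    refine Continuous.div (by fun_prop) (by fun_prop) fun p => ?_
    have := normSq_nonneg' p.1
    positivity
  refine (hz.mul_prod integrable_inv_one_add_sq).mono' hc.aestronglyMeasurable
    (Filter.Eventually.of_forall fun p => ?_)
  obtain ⟨z, t⟩ := p
  have hs := normSq_nonneg' z
  have hzs := norm_sq_le_normSq z
  simp only
  have e1 : (1 + ‖z‖ ^ 2) ^ (-(4 * n - 2 : ℝ) / 2) = ((1 + ‖z‖ ^ 2) ^ (2 * n - 1))⁻¹ := by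
    rw [← Real.rpow_natCast _ (2 * n - 1), ← Real.rpow_neg (by positivity)]
    congr 1
    rw [Nat.cast_sub (by omega)]; push_cast; ring
  rw [e1, Real.norm_eq_abs]
  generalize normSq z = s at hs hzs
  set D := t ^ 2 + (1 + s) ^ 2 with hD
  have hD0 : 0 < D := by positivity
  calc |(s ^ 2 + t ^ 2 - 1) * s / D ^ (n + 2)| = |s ^ 2 + t ^ 2 - 1| * s / D ^ (n + 2) := by
        rw [abs_div, abs_mul, abs_of_nonneg hs, abs_of_pos (by positivity : 0 < D ^ (n + 2))]
    _ ≤ D * (1 + s) / D ^ (n + 2) := by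
        gcongr
        · rw [abs_le]; constructor <;> nlinarith [sq_nonneg s, sq_nonneg t]
        · linarith
    _ = (1 + s) / (D ^ n * D) := by
        rw [pow_succ D (n + 1), pow_succ D n]; field_simp
    _ ≤ (1 + s) / (((1 + s) ^ 2) ^ n * (1 + t ^ 2)) := by
        gcongr
        · nlinarith [sq_nonneg t]
        · nlinarith [sq_nonneg t]
    _ = ((1 + s) ^ (2 * n - 1))⁻¹ * (1 + t ^ 2)⁻¹ := by
        have : ((1 + s) ^ 2) ^ n = (1 + s) ^ (2 * n - 1) * (1 + s) := by
          rw [← pow_mul, ← pow_succ]; congr 1; omega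
        rw [this]; field_simp
    _ ≤ _ := by gcongr

lemma main_pos (n : ℕ) (hn : 2 ≤ n) : 0 < ∫ p : (Fin n → ℂ) × ℝ,
        (normSq p.1 ^ 2 + p.2 ^ 2 - 1) * normSq p.1 /
          (p.2 ^ 2 + (1 + normSq p.1) ^ 2) ^ (n + 2) := by
  obtain ⟨k, hk, hin⟩ := inner_int n
  obtain ⟨c, hc, hpol⟩ := polar n (by omega)
  rw [Measure.volume_eq_prod, integral_prod _ (main_int n hn)]
  have h1 : ∀ z : Fin n → ℂ, (∫ t : ℝ, (normSq z ^ 2 + t ^ 2 - 1) * normSq z /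
          (t ^ 2 + (1 + normSq z) ^ 2) ^ (n + 2)) = k * (fun s : ℝ => s *
            (((n + 1) * (1 + s) - (2 * n + 1)) / (1 + s) ^ (2 * n + 2))) (normSq z) := by
    intro z
    have hs := normSq_nonneg' z
    generalize normSq z = s at hs
    have := hin (1 + s) (by positivity)
    simp only
    rw [mul_left_comm, ← this, ← integral_const_mul]
    congr 1; ext t; ring
  rw [integral_congr_ae (Filter.Eventually.of_forall h1)]
  rw [integral_const_mul, hpol (fun s : ℝ => s *
            (((n + 1) * (1 + s) - (2 * n + 1)) / (1 + s) ^ (2 * n + 2)))]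
  exact mul_pos hk (mul_pos hc (radial_pos n hn))

theorem stmt_3 (n : ℕ) (hn : 2 ≤ n) :
    Integrable (fun p : (Fin n → ℂ) × ℝ =>
      (normSq p.1 ^ 2 + p.2 ^ 2 - 1) * normSq p.1 /
        (p.2 ^ 2 + (1 + normSq p.1) ^ 2) ^ (n + 2)) ∧
    (0 < ∫ p : (Fin n → ℂ) × ℝ,
        (normSq p.1 ^ 2 + p.2 ^ 2 - 1) * normSq p.1 /
          (p.2 ^ 2 + (1 + normSq p.1) ^ 2) ^ (n + 2)) ∧
    0 < (1 / (2 * (n : ℝ))) * ∫ p : (Fin n → ℂ) × ℝ,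
        4 ^ n * ((normSq p.1 ^ 2 + p.2 ^ 2 - 1) * normSq p.1) /
          (p.2 ^ 2 + (1 + normSq p.1) ^ 2) ^ (n + 2) := by
  refine ⟨main_int n hn, main_pos n hn, ?_⟩
  simp_rw [mul_div_assoc (4 ^ n : ℝ)]
  rw [integral_const_mul]
  have := main_pos n hn
  have hn' : (0 : ℝ) < n := by exact_mod_cast (by omega : 0 < n)
  exact mul_pos (by positivity) (mul_pos (by positivity) this)
end

section
/- Let n ≥ 2 be an integer. There exists a constant C > 0 (depending only on n) such that for every ε ∈ (0,1): ∫₀^∞ ∫₀^∞ ε⁴ τ² r^{2n+1} / ( ((1+ε²r²)² + ε⁴τ²) (τ² + (1+r²)²)^{n+1} ) dτ dr ≤ C ε. -/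
open MeasureTheory Real Set

lemma aux_pt (n : ℕ) (hn : 2 ≤ n) (ε r τ : ℝ) (hε : 0 < ε) (hr : 0 < r) :
    ε ^ 4 * τ ^ 2 * r ^ (2 * n + 1) /
            (((1 + ε ^ 2 * r ^ 2) ^ 2 + ε ^ 4 * τ ^ 2) *
              (τ ^ 2 + (1 + r ^ 2) ^ 2) ^ (n + 1)) ≤
      (ε * (1 + r ^ 2)⁻¹) * (1 + τ ^ 2) ^ (-(3 / 4) : ℝ) := by
  have hT : 0 < 1 + τ ^ 2 := by positivity
  set q : ℝ := (1 + τ ^ 2) ^ (1 / 4 : ℝ) with hq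
  have hq0 : 0 < q := by positivity
  have hq4 : q ^ 4 = 1 + τ ^ 2 := by
    rw [hq, ← Real.rpow_natCast, ← Real.rpow_mul hT.le]; norm_num
  have hf : (1 + τ ^ 2) ^ (-(3 / 4) : ℝ) = q / (1 + τ ^ 2) := by
    rw [hq, eq_div_iff hT.ne']
    nth_rewrite 2 [← Real.rpow_one (1 + τ ^ 2)]
    rw [← Real.rpow_add hT]; norm_num
  have h1 : ε ^ 4 * τ ^ 2 ≤ ε * q * ((1 + ε ^ 2 * r ^ 2) ^ 2 + ε ^ 4 * τ ^ 2) := by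
    have hx : 0 < ε * q := by positivity
    have hy : 0 ≤ ε ^ 4 * τ ^ 2 := by positivity
    have hxy : ε ^ 4 * τ ^ 2 ≤ (ε * q) ^ 4 := by
      rw [mul_pow, hq4]; gcongr; linarith
    have hP : 1 ≤ (1 + ε ^ 2 * r ^ 2) ^ 2 := by
      apply one_le_pow₀; have : 0 ≤ ε ^ 2 * r ^ 2 := by positivity
      linarith
    have : ε ^ 4 * τ ^ 2 ≤ ε * q * (1 + ε ^ 4 * τ ^ 2) := by
      rcases le_total 1 (ε * q) with h | h
      · nlinarith
      · have : (ε * q) ^ 4 ≤ ε * q := pow_le_of_le_one hx.le h (by norm_num)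
        nlinarith [mul_nonneg hx.le hy]
    refine this.trans ?_
    gcongr
  have h2 : r ^ (2 * n + 1) * ((1 + τ ^ 2) * (1 + r ^ 2)) ≤
      (τ ^ 2 + (1 + r ^ 2) ^ 2) ^ (n + 1) := by
    have hA : 1 ≤ 1 + r ^ 2 := by nlinarith
    have hrA : r ≤ 1 + r ^ 2 := by nlinarith [sq_nonneg (r - 1)]
    have a1 : r ^ (2 * n + 1) * (1 + r ^ 2) ≤ ((1 + r ^ 2) ^ 2) ^ n := by
      calc r ^ (2 * n + 1) * (1 + r ^ 2) = (r ^ 2) ^ n * r * (1 + r ^ 2) := by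
            rw [pow_succ, pow_mul]
        _ ≤ (1 + r ^ 2) ^ n * (1 + r ^ 2) * (1 + r ^ 2) := by
            gcongr; linarith
        _ = (1 + r ^ 2) ^ (n + 2) := by ring
        _ ≤ (1 + r ^ 2) ^ (2 * n) := pow_le_pow_right₀ hA (by omega)
        _ = _ := by rw [pow_mul]
    calc r ^ (2 * n + 1) * ((1 + τ ^ 2) * (1 + r ^ 2))
        = r ^ (2 * n + 1) * (1 + r ^ 2) * (1 + τ ^ 2) := by ring
      _ ≤ ((1 + r ^ 2) ^ 2) ^ n * (1 + τ ^ 2) := by gcongr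
      _ ≤ (τ ^ 2 + (1 + r ^ 2) ^ 2) ^ n * (τ ^ 2 + (1 + r ^ 2) ^ 2) := by
          have b1 : (1 + r ^ 2) ^ 2 ≤ τ ^ 2 + (1 + r ^ 2) ^ 2 := by nlinarith
          have b2 : 1 + τ ^ 2 ≤ τ ^ 2 + (1 + r ^ 2) ^ 2 := by nlinarith
          exact mul_le_mul (pow_le_pow_left₀ (by positivity) b1 n) b2 (by positivity)
            (by positivity)
      _ = _ := (pow_succ _ n).symm
  rw [hf, div_le_iff₀ (by positivity)]
  have hA : 0 < 1 + r ^ 2 := by positivity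
  have h3 : r ^ (2 * n + 1) ≤ (τ ^ 2 + (1 + r ^ 2) ^ 2) ^ (n + 1) / ((1 + τ ^ 2) * (1 + r ^ 2)) := by
    rw [le_div_iff₀ (by positivity)]; exact h2
  calc _ ≤ (ε * q * ((1 + ε ^ 2 * r ^ 2) ^ 2 + ε ^ 4 * τ ^ 2)) *
        ((τ ^ 2 + (1 + r ^ 2) ^ 2) ^ (n + 1) / ((1 + τ ^ 2) * (1 + r ^ 2))) := by gcongr
    _ = _ := by field_simp

lemma aux_int : Integrable (fun τ : ℝ => (1 + τ ^ 2) ^ (-(3 / 4) : ℝ)) := by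
  have := integrable_rpow_neg_one_add_norm_sq (E := ℝ) (μ := volume) (r := 3 / 2)
    (by norm_num)
  convert this using 3
  · simp
  · norm_num

theorem stmt_12 (n : ℕ) (hn : 2 ≤ n) :
    ∃ C : ℝ, 0 < C ∧ ∀ ε : ℝ, ε ∈ Ioo (0 : ℝ) 1 →
      (∫ r in Ioi (0 : ℝ), ∫ τ in Ioi (0 : ℝ),
          ε ^ 4 * τ ^ 2 * r ^ (2 * n + 1) /
            (((1 + ε ^ 2 * r ^ 2) ^ 2 + ε ^ 4 * τ ^ 2) *
              (τ ^ 2 + (1 + r ^ 2) ^ 2) ^ (n + 1))) ≤ C * ε := by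
  set F : ℝ := ∫ τ in Ioi (0 : ℝ), (1 + τ ^ 2) ^ (-(3 / 4) : ℝ) with hF
  set G : ℝ := ∫ r in Ioi (0 : ℝ), (1 + r ^ 2)⁻¹ with hG
  have hF0 : 0 ≤ F := integral_nonneg fun τ => by positivity
  have hG0 : 0 ≤ G := integral_nonneg fun τ => by positivity
  refine ⟨G * F + 1, by positivity, fun ε hε => ?_⟩
  have hε0 : 0 < ε := hε.1
  have key : (∫ r in Ioi (0 : ℝ), ∫ τ in Ioi (0 : ℝ),
          ε ^ 4 * τ ^ 2 * r ^ (2 * n + 1) /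
            (((1 + ε ^ 2 * r ^ 2) ^ 2 + ε ^ 4 * τ ^ 2) *
              (τ ^ 2 + (1 + r ^ 2) ^ 2) ^ (n + 1)))
      ≤ ∫ r in Ioi (0 : ℝ), (ε * (1 + r ^ 2)⁻¹) * F := by
    apply integral_mono_of_nonneg
    · filter_upwards [ae_restrict_mem measurableSet_Ioi] with r hr
      have hr : 0 < r := hr
      exact integral_nonneg fun τ => by positivity
    · exact ((integrable_inv_one_add_sq.const_mul ε).mul_const F).integrableOn
    · filter_upwards [ae_restrict_mem measurableSet_Ioi] with r hr
      have hr : 0 < r := hr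
      rw [hF, ← integral_const_mul]
      apply integral_mono_of_nonneg
      · exact Filter.Eventually.of_forall fun τ => by positivity
      · exact (aux_int.const_mul _).integrableOn
      · exact Filter.Eventually.of_forall fun τ => aux_pt n hn ε r τ hε0 hr
  rw [integral_mul_const, integral_const_mul, ← hG] at key
  nlinarith
end
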